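/- arXiv:2312.01894 — 8 statements merged into one kernel-verified Lean document; each statement's English description precedes it below -/
import Mathlib

section
/- Let (T, ρ) be a continuum tree, let x, y ∈ T be distinct with ℓ = ρ(x,y), and let δ, ε > 0 satisfy δ ≤ ℓ, ε ≤ ℓ and δ + ε > ℓ. Set r = (δ + ε − ℓ)/2 and let v be the unique point of [[x,y]] with ρ(x,v) = (ℓ − ε + δ)/2. Then B_δ(x) ∩ B_ε(y) = B_r(v). -/
/-- A continuum tree: a compact metric space in which, for all `x y`, there is a
unique isometric parametrisation `[0, dist x y] → T` from `x` to `y`, and the image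
of every injective continuous path from `x` to `y` equals the image of this geodesic. -/
structure ContinuumTree (T : Type*) [MetricSpace T] [CompactSpace T] where
  geodesic : T → T → ℝ → T
  geodesic_isometry : ∀ x y : T, ∀ s ∈ Set.Icc (0 : ℝ) (dist x y),
    ∀ t ∈ Set.Icc (0 : ℝ) (dist x y),
      dist (geodesic x y s) (geodesic x y t) = |s - t|
  geodesic_source : ∀ x y : T, geodesic x y 0 = x
  geodesic_target : ∀ x y : T, geodesic x y (dist x y) = y
  geodesic_unique : ∀ x y : T, ∀ γ : ℝ → T,
    (∀ s ∈ Set.Icc (0 : ℝ) (dist x y), ∀ t ∈ Set.Icc (0 : ℝ) (dist x y),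
      dist (γ s) (γ t) = |s - t|) →
    γ 0 = x → γ (dist x y) = y →
    Set.EqOn γ (geodesic x y) (Set.Icc 0 (dist x y))
  path_image : ∀ x y : T, ∀ γ : Path x y, Function.Injective ⇑γ →
    Set.range ⇑γ = geodesic x y '' Set.Icc 0 (dist x y)

/-- The geodesic segment `[[x,y]]`: the image of the unique geodesic from `x` to `y`. -/
def ContinuumTree.seg {T : Type*} [MetricSpace T] [CompactSpace T]
    (ct : ContinuumTree T) (x y : T) : Set T :=
  ct.geodesic x y '' Set.Icc 0 (dist x y)

theorem ContinuumTree.contOn {T : Type*} [MetricSpace T] [CompactSpace T]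
    (ct : ContinuumTree T) (x y : T) :
    ContinuousOn (ct.geodesic x y) (Set.Icc 0 (dist x y)) := by
  apply LipschitzOnWith.continuousOn (K := 1)
  apply LipschitzOnWith.of_dist_le_mul
  intro s hs t ht
  rw [ct.geodesic_isometry x y s hs t ht, Real.dist_eq]
  simp

theorem ContinuumTree.inj {T : Type*} [MetricSpace T] [CompactSpace T]
    (ct : ContinuumTree T) (x y : T) {s t : ℝ} (hs : s ∈ Set.Icc 0 (dist x y))
    (ht : t ∈ Set.Icc 0 (dist x y)) (h : ct.geodesic x y s = ct.geodesic x y t) : s = t := by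
  have := ct.geodesic_isometry x y s hs t ht
  rw [h, dist_self] at this
  exact sub_eq_zero.mp (abs_eq_zero.mp this.symm)

theorem ContinuumTree.seg_subset {T : Type*} [MetricSpace T] [CompactSpace T]
    (ct : ContinuumTree T) {x y : T} (hxy : x ≠ y) (z : T) {v : T} (hv : v ∈ ct.seg x y) :
    v ∈ ct.seg x z ∨ v ∈ ct.seg z y := by
  have hcl : IsClosed (ct.seg z y) :=
    (isCompact_Icc.image_of_continuousOn (ct.contOn z y)).isClosed
  have hK : IsCompact (Set.Icc 0 (dist x z) ∩ ct.geodesic x z ⁻¹' ct.seg z y) :=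
    isCompact_Icc.of_isClosed_subset
      ((ct.contOn x z).preimage_isClosed_of_isClosed isClosed_Icc hcl) Set.inter_subset_left
  have hne : (Set.Icc 0 (dist x z) ∩ ct.geodesic x z ⁻¹' ct.seg z y).Nonempty := by
    refine ⟨dist x z, ⟨dist_nonneg, le_rfl⟩, ?_⟩
    rw [Set.mem_preimage, ct.geodesic_target]
    exact ⟨0, ⟨le_rfl, dist_nonneg⟩, ct.geodesic_source z y⟩
  obtain ⟨s, ⟨⟨hs, t, ht, hst⟩, hmin⟩⟩ := hK.exists_isLeast hne
  have hmin' : ∀ a ∈ Set.Icc 0 (dist x z), ct.geodesic x z a ∈ ct.seg z y → s ≤ a :=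
    fun a ha h => hmin ⟨ha, h⟩
  set D := dist x z with hD
  set L := dist z y with hL
  have hM : 0 < s + L - t := by
    rcases lt_or_ge 0 (s + L - t) with h | h
    · exact h
    · exfalso
      have h1 : s = 0 := by linarith [hs.1, ht.2]
      have h2 : t = L := by linarith [hs.1, ht.2]
      rw [h1, h2, hL, ct.geodesic_target, ct.geodesic_source] at hst
      exact hxy hst.symm
  set M := s + L - t with hMd
  let c1 : ℝ → ℝ := fun a => max 0 (min a D)
  let c2 : ℝ → ℝ := fun a => max 0 (min a L)
  have hc1 : ∀ a, c1 a ∈ Set.Icc 0 D := fun a =>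
    ⟨le_max_left _ _, max_le dist_nonneg (min_le_right _ _)⟩
  have hc2 : ∀ a, c2 a ∈ Set.Icc 0 L := fun a =>
    ⟨le_max_left _ _, max_le dist_nonneg (min_le_right _ _)⟩
  have e1 : ∀ a ∈ Set.Icc 0 D, c1 a = a := fun a ha => by
    simp [c1, ha.1, ha.2]
  have e2 : ∀ a ∈ Set.Icc 0 L, c2 a = a := fun a ha => by
    simp [c2, ha.1, ha.2]
  have G1 : Continuous fun a => ct.geodesic x z (c1 a) :=
    (ct.contOn x z).comp_continuous (by fun_prop) hc1
  have G2 : Continuous fun a => ct.geodesic z y (c2 a) :=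
    (ct.contOn z y).comp_continuous (by fun_prop) hc2
  let f : ℝ → T := fun a => if a ≤ s then ct.geodesic x z (c1 a)
    else ct.geodesic z y (c2 (t + a - s))
  have hf : Continuous f := by
    refine Continuous.if_le G1 (G2.comp (by fun_prop : Continuous fun a : ℝ => t + a - s))
      continuous_id continuous_const ?_
    intro a ha
    have ha2 : a = s := ha
    rw [ha2]
    simp only [Function.comp, add_sub_cancel_right]
    rw [e1 _ hs, e2 _ ht, hst]
  have f1 : ∀ a, 0 ≤ a → a ≤ s → f a = ct.geodesic x z a := by
    intro a h0 h
    simp only [f, if_pos h]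
    rw [e1 a ⟨h0, h.trans hs.2⟩]
  have f2 : ∀ a, s < a → a ≤ M → f a = ct.geodesic z y (t + a - s) := by
    intro a h h1
    simp only [f, if_neg (not_le.mpr h)]
    rw [e2 _ ⟨by linarith [ht.1], by linarith⟩]
  have hmix : ∀ a b, 0 ≤ a → a ≤ s → s < b → b ≤ M → f a ≠ f b := by
    intro a b h0 h1 h2 h3 h
    rw [f1 a h0 h1, f2 b h2 h3] at h
    have hb : t + b - s ∈ Set.Icc 0 L := ⟨by linarith [ht.1], by linarith⟩
    have := hmin' a ⟨h0, h1.trans hs.2⟩ ⟨_, hb, h.symm⟩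
    have has : a = s := le_antisymm h1 this
    rw [has, ← hst] at h
    have := ct.inj z y ht hb h
    linarith
  have hinj : ∀ a b, 0 ≤ a → a ≤ M → 0 ≤ b → b ≤ M → f a = f b → a = b := by
    intro a b ha haM hb hbM h
    rcases le_or_gt a s with h1 | h1 <;> rcases le_or_gt b s with h2 | h2
    · rw [f1 a ha h1, f1 b hb h2] at h
      exact ct.inj x z ⟨ha, h1.trans hs.2⟩ ⟨hb, h2.trans hs.2⟩ h
    · exact absurd h (hmix a b ha h1 h2 hbM)
    · exact absurd h.symm (hmix b a hb h2 h1 haM)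
    · rw [f2 a h1 haM, f2 b h2 hbM] at h
      have := ct.inj z y ⟨by linarith [ht.1], by linarith⟩ ⟨by linarith [ht.1], by linarith⟩ h
      linarith
  have f0 : f 0 = x := by rw [f1 0 le_rfl hs.1, ct.geodesic_source]
  have fM : f M = y := by
    rcases le_or_gt M s with h | h
    · have h2 : t = L := by linarith [ht.2]
      have h3 : M = s := by linarith
      rw [f1 M hM.le h, h3, ← hst, h2, hL, ct.geodesic_target]
    · rw [f2 M h le_rfl, show t + M - s = L by rw [hMd]; ring, hL, ct.geodesic_target]
  let γ : Path x y :=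
    { toFun := fun u => f (M * u)
      continuous_toFun := by fun_prop
      source' := by simp [f0]
      target' := by simp [fM] }
  have hγ : Function.Injective γ := by
    intro u w h
    have hb : ∀ u : unitInterval, 0 ≤ M * u ∧ M * u ≤ M := fun u =>
      ⟨mul_nonneg hM.le u.2.1, mul_le_of_le_one_right hM.le u.2.2⟩
    have := hinj _ _ (hb u).1 (hb u).2 (hb w).1 (hb w).2 h
    exact Subtype.ext (mul_left_cancel₀ hM.ne' this)
  have himg := ct.path_image x y γ hγ
  unfold ContinuumTree.seg at hv
  rw [← himg] at hv
  obtain ⟨u, rfl⟩ := hv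
  have hu0 : 0 ≤ M * (u : ℝ) := mul_nonneg hM.le u.2.1
  have hu1 : M * (u : ℝ) ≤ M := mul_le_of_le_one_right hM.le u.2.2
  change f (M * u) ∈ _ ∨ f (M * u) ∈ _
  rcases le_or_gt (M * (u : ℝ)) s with h | h
  · left
    rw [f1 _ hu0 h]
    exact ⟨_, ⟨hu0, h.trans hs.2⟩, rfl⟩
  · right
    rw [f2 _ h hu1]
    exact ⟨_, ⟨by linarith [ht.1], by linarith⟩, rfl⟩

theorem ContinuumTree.dist_seg {T : Type*} [MetricSpace T] [CompactSpace T]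
    (ct : ContinuumTree T) {x y v : T} (hv : v ∈ ct.seg x y) :
    dist x v + dist v y = dist x y := by
  obtain ⟨t, ht, rfl⟩ := hv
  have h1 := ct.geodesic_isometry x y 0 ⟨le_rfl, dist_nonneg⟩ t ht
  have h2 := ct.geodesic_isometry x y t ht (dist x y) ⟨dist_nonneg, le_rfl⟩
  rw [ct.geodesic_source, zero_sub, abs_neg, abs_of_nonneg ht.1] at h1
  rw [ct.geodesic_target, abs_sub_comm, abs_of_nonneg (sub_nonneg.mpr ht.2)] at h2
  linarith

/-- The intersection of two overlapping balls in a continuum tree is a ball centred at the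
midpoint `v` of the overlap segment, of radius `r = (δ + ε - ℓ)/2`. -/
theorem stmt_4 {T : Type*} [MetricSpace T] [CompactSpace T] (ct : ContinuumTree T)
    {x y : T} (hxy : x ≠ y) {δ ε : ℝ} (hδ0 : 0 < δ) (hε0 : 0 < ε)
    (hδℓ : δ ≤ dist x y) (hεℓ : ε ≤ dist x y) (hsum : dist x y < δ + ε)
    {v : T} (hv : v ∈ ct.seg x y) (hvd : dist x v = (dist x y - ε + δ) / 2) :
    Metric.ball x δ ∩ Metric.ball y ε = Metric.ball v ((δ + ε - dist x y) / 2) := by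
  have hd := ct.dist_seg hv
  ext z
  simp only [Set.mem_inter_iff, Metric.mem_ball]
  constructor
  · rintro ⟨h1, h2⟩
    rcases ct.seg_subset hxy z hv with h | h
    · have := ct.dist_seg h
      rw [dist_comm z x] at h1
      rw [dist_comm z v]
      linarith
    · have := ct.dist_seg h
      linarith
  · intro h
    have h1 := dist_triangle z v x
    have h2 := dist_triangle z v y
    rw [dist_comm v x] at h1
    constructor <;> linarith
end

section
/- Let (T, ρ) be a continuum tree, let x, y ∈ T be distinct with ℓ = ρ(x,y), and let δ, ε > 0 satisfy δ ≤ ℓ, ε ≤ ℓ and δ + ε > ℓ. Let u and w be the unique points of [[x,y]] with ρ(x,u) = ℓ − ε and ρ(x,w) = δ. Then B_δ(x) ∩ B_ε(y) = ⋃_{σ ∈ [[u,w]]} B_{min(ρ(u,σ), ρ(σ,w))}(σ). -/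
namespace ContinuumTree

variable {T : Type*} [MetricSpace T] [CompactSpace T]

open Classical in
noncomputable def cat (ct : ContinuumTree T) (x p z : T) (t : ℝ) : T :=
  if t ≤ dist x p then ct.geodesic x p t else ct.geodesic p z (t - dist x p)

theorem cat_lip_aux (ct : ContinuumTree T) (x p z : T) {s t : ℝ} (hs : 0 ≤ s) (hst : s ≤ t)
    (ht : t ≤ dist x p + dist p z) : dist (ct.cat x p z s) (ct.cat x p z t) ≤ t - s := by
  unfold cat
  split_ifs with h1 h2 h2
  · rw [ct.geodesic_isometry x p s ⟨hs, h1⟩ t ⟨by linarith, h2⟩, abs_sub_comm, abs_of_nonneg (by linarith)]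
  · have e1 := ct.geodesic_isometry x p s ⟨hs, h1⟩ (dist x p) ⟨dist_nonneg, le_rfl⟩
    have e2 := ct.geodesic_isometry p z 0 ⟨le_rfl, dist_nonneg⟩ (t - dist x p)
      ⟨by linarith, by linarith⟩
    rw [ct.geodesic_target, abs_sub_comm, abs_of_nonneg (by linarith)] at e1
    rw [ct.geodesic_source, abs_sub_comm, abs_of_nonneg (by linarith)] at e2
    have := dist_triangle (ct.geodesic x p s) p (ct.geodesic p z (t - dist x p))
    linarith
  · exact absurd (hst.trans h2) h1
  · rw [ct.geodesic_isometry p z _ ⟨by linarith, by linarith⟩ _ ⟨by linarith, by linarith⟩,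
      abs_sub_comm, abs_of_nonneg (by linarith)]
    linarith

theorem cat_zero (ct : ContinuumTree T) (x p z : T) : ct.cat x p z 0 = x := by
  simp [cat, ct.geodesic_source]

theorem cat_mid (ct : ContinuumTree T) (x p z : T) : ct.cat x p z (dist x p) = p := by
  simp [cat, ct.geodesic_target]

theorem cat_end (ct : ContinuumTree T) (x p z : T) : ct.cat x p z (dist x p + dist p z) = z := by
  unfold cat
  split_ifs with h
  · have h0 : dist p z = 0 := le_antisymm (by linarith) dist_nonneg
    rw [h0, add_zero, ct.geodesic_target]
    exact dist_eq_zero.1 h0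
  · rw [add_sub_cancel_left, ct.geodesic_target]

theorem mem_seg_iff (ct : ContinuumTree T) (x y q : T) :
    q ∈ ct.seg x y ↔ dist x q + dist q y = dist x y := by
  constructor
  · rintro ⟨t, ht, rfl⟩
    have e1 := ct.geodesic_isometry x y 0 ⟨le_rfl, dist_nonneg⟩ t ht
    have e2 := ct.geodesic_isometry x y t ht (dist x y) ⟨dist_nonneg, le_rfl⟩
    rw [ct.geodesic_source, abs_sub_comm, abs_of_nonneg (by linarith [ht.1])] at e1
    rw [ct.geodesic_target, abs_sub_comm, abs_of_nonneg (by linarith [ht.2])] at e2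
    linarith
  · intro h
    have key : ∀ s t : ℝ, 0 ≤ s → s ≤ t → t ≤ dist x y →
        dist (ct.cat x q y s) (ct.cat x q y t) = t - s := by
      intro s t hs hst ht
      apply le_antisymm (ct.cat_lip_aux x q y hs hst (by linarith))
      have a1 := ct.cat_lip_aux x q y le_rfl hs (by linarith)
      have a2 := ct.cat_lip_aux x q y (hs.trans hst) (t := dist x q + dist q y) (by linarith) le_rfl
      rw [cat_zero] at a1
      rw [cat_end] at a2
      have := dist_triangle4 x (ct.cat x q y s) (ct.cat x q y t) y
      linarith
    have hm : dist x q ∈ Set.Icc 0 (dist x y) :=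
      ⟨dist_nonneg, by linarith [dist_nonneg (x := q) (y := y)]⟩
    refine ⟨dist x q, hm, ?_⟩
    rw [← ct.geodesic_unique x y (ct.cat x q y) _ (ct.cat_zero x q y)
      (by rw [← h]; exact ct.cat_end x q y) hm, cat_mid]
    intro s hs t ht
    rcases le_total s t with hst | hst
    · rw [key s t hs.1 hst ht.2, abs_sub_comm, abs_of_nonneg (by linarith)]
    · rw [dist_comm, key t s ht.1 hst hs.2, abs_of_nonneg (by linarith)]

theorem geo_inj (ct : ContinuumTree T) (x y : T) {s t : ℝ} (hs : s ∈ Set.Icc 0 (dist x y))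
    (ht : t ∈ Set.Icc 0 (dist x y)) (h : ct.geodesic x y s = ct.geodesic x y t) : s = t := by
  have := ct.geodesic_isometry x y s hs t ht
  rw [h, dist_self] at this
  exact sub_eq_zero.1 (abs_eq_zero.1 this.symm)

theorem cat_inj_aux (ct : ContinuumTree T) (x p z : T)
    (hd : ∀ q, q ∈ ct.seg x p → q ∈ ct.seg p z → q = p) {s t : ℝ} (hs : 0 ≤ s) (hst : s ≤ t)
    (ht : t ≤ dist x p + dist p z) (h : ct.cat x p z s = ct.cat x p z t) : s = t := by
  unfold cat at h
  split_ifs at h with h1 h2 h2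
  · exact ct.geo_inj x p ⟨hs, h1⟩ ⟨by linarith, h2⟩ h
  · have m : t - dist x p ∈ Set.Icc 0 (dist p z) := ⟨by linarith, by linarith⟩
    have e := hd (ct.geodesic p z (t - dist x p)) (h ▸ ⟨s, ⟨hs, h1⟩, rfl⟩) ⟨_, m, rfl⟩
    have := ct.geo_inj p z m ⟨le_rfl, dist_nonneg⟩ (e.trans (ct.geodesic_source p z).symm)
    linarith
  · exact absurd (hst.trans h2) h1
  · have := ct.geo_inj p z ⟨by linarith, by linarith⟩ ⟨by linarith, by linarith⟩ h
    linarith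

theorem dist_add_of_disj (ct : ContinuumTree T) (x p z : T)
    (hd : ∀ q, q ∈ ct.seg x p → q ∈ ct.seg p z → q = p) :
    dist x p + dist p z = dist x z := by
  set L := dist x p + dist p z with hL
  have hL0 : 0 ≤ L := by positivity
  rcases hL0.eq_or_lt with h0 | hpos
  · have := dist_triangle x p z
    have := dist_nonneg (x := x) (y := z)
    linarith
  rw [hL, ← ct.mem_seg_iff]
  have hI : ∀ t : unitInterval, (t : ℝ) * L ∈ Set.Icc 0 L := fun t =>
    ⟨mul_nonneg t.2.1 hL0, mul_le_of_le_one_left hL0 t.2.2⟩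
  have hcont : ContinuousOn (ct.cat x p z) (Set.Icc 0 L) := by
    have : LipschitzOnWith 1 (ct.cat x p z) (Set.Icc 0 L) := by
      apply LipschitzOnWith.of_dist_le_mul
      intro s hs t ht
      rw [NNReal.coe_one, one_mul, Real.dist_eq]
      rcases le_total s t with hst | hst
      · rw [abs_sub_comm, abs_of_nonneg (by linarith)]
        exact ct.cat_lip_aux x p z hs.1 hst ht.2
      · rw [dist_comm, abs_of_nonneg (by linarith)]
        exact ct.cat_lip_aux x p z ht.1 hst hs.2
    exact this.continuousOn
  let γ : Path x z :=
    { toFun := fun t => ct.cat x p z ((t : ℝ) * L)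
      continuous_toFun := hcont.comp_continuous (by fun_prop) hI
      source' := by simp [cat_zero]
      target' := by simp [hL, cat_end] }
  have hinj : Function.Injective ⇑γ := by
    intro s t hst
    have hst' : ct.cat x p z ((s : ℝ) * L) = ct.cat x p z ((t : ℝ) * L) := hst
    have : (s : ℝ) * L = (t : ℝ) * L := by
      rcases le_total ((s : ℝ) * L) ((t : ℝ) * L) with h | h
      · exact ct.cat_inj_aux x p z hd (hI s).1 h (hI t).2 hst'
      · exact (ct.cat_inj_aux x p z hd (hI t).1 h (hI s).2 hst'.symm).symm
    exact Subtype.ext (mul_right_cancel₀ hpos.ne' this)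
  have hr := ct.path_image x z γ hinj
  unfold seg
  rw [← hr]
  refine ⟨⟨dist x p / L, by positivity, ?_⟩, ?_⟩
  · rw [div_le_one hpos, hL]
    linarith [dist_nonneg (x := p) (y := z)]
  · change ct.cat x p z (dist x p / L * L) = p
    rw [div_mul_cancel₀ _ hpos.ne', cat_mid]

theorem exists_proj (ct : ContinuumTree T) (x y z : T) : ∃ p,
    dist x p + dist p y = dist x y ∧ dist x p + dist p z = dist x z ∧
    dist y p + dist p z = dist y z := by
  have hcl : IsClosed {q : T | dist x q + dist q y = dist x y} :=
    isClosed_eq (by fun_prop) continuous_const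
  obtain ⟨p, hp, hmin⟩ := hcl.isCompact.exists_isMinOn ⟨x, by simp⟩
    (f := fun q => dist q z) (by fun_prop)
  simp only [Set.mem_setOf_eq] at hp
  have hm : ∀ q, dist x q + dist q y = dist x y → dist p z ≤ dist q z := fun q hq => hmin hq
  refine ⟨p, hp, ct.dist_add_of_disj x p z ?_, ct.dist_add_of_disj y p z ?_⟩
  all_goals
    intro q h1 h2
    rw [mem_seg_iff] at h1 h2
    have a := dist_triangle x q y
    have a1 := dist_triangle x p q
    have a2 := dist_triangle q p y
    have b := dist_nonneg (x := p) (y := q)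
    have c1 := dist_comm p q
    have c2 := dist_comm y q
    have c3 := dist_comm y p
    have := hm q (by linarith)
    exact dist_eq_zero.1 (by linarith)

theorem dist_on_seg (ct : ContinuumTree T) {x y p q : T} (hp : p ∈ ct.seg x y)
    (hq : q ∈ ct.seg x y) : dist p q = |dist x p - dist x q| := by
  obtain ⟨s, hs, rfl⟩ := hp
  obtain ⟨t, ht, rfl⟩ := hq
  have e1 := ct.geodesic_isometry x y 0 ⟨le_rfl, dist_nonneg⟩ t ht
  have e2 := ct.geodesic_isometry x y 0 ⟨le_rfl, dist_nonneg⟩ s hs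
  rw [ct.geodesic_source, abs_sub_comm, abs_of_nonneg (by linarith [ht.1])] at e1
  rw [ct.geodesic_source, abs_sub_comm, abs_of_nonneg (by linarith [hs.1])] at e2
  rw [ct.geodesic_isometry x y s hs t ht, e1, e2]
  simp

end ContinuumTree

/-- The intersection of two overlapping balls in a continuum tree is the union of the balls
`B_{min(ρ(u,σ), ρ(σ,w))}(σ)` over `σ ∈ [[u,w]]`. -/
theorem stmt_5 {T : Type*} [MetricSpace T] [CompactSpace T] (ct : ContinuumTree T)
    {x y : T} (hxy : x ≠ y) {δ ε : ℝ} (hδ0 : 0 < δ) (hε0 : 0 < ε)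
    (hδℓ : δ ≤ dist x y) (hεℓ : ε ≤ dist x y) (hsum : dist x y < δ + ε)
    {u w : T} (hu : u ∈ ct.seg x y) (hud : dist x u = dist x y - ε)
    (hw : w ∈ ct.seg x y) (hwd : dist x w = δ) :
    Metric.ball x δ ∩ Metric.ball y ε =
      ⋃ σ ∈ ct.seg u w, Metric.ball σ (min (dist u σ) (dist σ w)) := by
  have huw : dist u w = δ + ε - dist x y := by
    rw [ct.dist_on_seg hu hw, hud, hwd, abs_sub_comm, abs_of_nonneg (by linarith)]
    ring
  ext z
  simp only [Set.mem_inter_iff, Metric.mem_ball, Set.mem_iUnion, exists_prop, lt_min_iff]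
  constructor
  · rintro ⟨h1, h2⟩
    obtain ⟨p, hp, hpx, hpy⟩ := ct.exists_proj x y z
    have hps := (ct.mem_seg_iff x y p).2 hp
    have c1 := dist_comm z x
    have c2 := dist_comm z y
    have c3 := dist_comm p y
    have c4 := dist_comm p z
    have hn := dist_nonneg (x := p) (y := z)
    have e1 := ct.dist_on_seg hu hps
    have e2 := ct.dist_on_seg hps hw
    rw [hud, abs_sub_comm, abs_of_nonneg (by linarith)] at e1
    rw [hwd, abs_sub_comm, abs_of_nonneg (by linarith)] at e2
    refine ⟨p, (ct.mem_seg_iff u w p).2 (by linarith), by linarith, by linarith⟩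
  · rintro ⟨σ, hσ, h1, h2⟩
    rw [ct.mem_seg_iff] at hσ hw
    have c1 := dist_comm z x
    have c2 := dist_comm z σ
    have t1 := dist_triangle x σ z
    have t2 := dist_triangle x u σ
    have t3 := dist_triangle z σ y
    have t4 := dist_triangle σ w y
    constructor <;> linarith
end

section
/- Let E and Ẽ be excursions with lifetimes T(E) and T(Ẽ), and let δ > 0 be such that sup_{t ∈ [0,∞)} |E(t) − Ẽ(t)| < δ. Then the Gromov–Hausdorff distance between the metric quotients T_E of ([0,T(E)], ρ_E) and T_Ẽ of ([0,T(Ẽ)], ρ_Ẽ) satisfies d_GH(T_E, T_Ẽ) ≤ 8δ. -/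
/-- `E` is an excursion with lifetime `T`: a continuous nonnegative function on `[0,∞)`
(extended by `0` to all of `ℝ`) vanishing at `0` and on `[T,∞)`, and strictly positive
on `(0,T)`. -/
def IsExcursion (E : ℝ → ℝ) (T : ℝ) : Prop :=
  Continuous E ∧ 0 < T ∧ (∀ t, 0 ≤ E t) ∧ (∀ t ≤ (0 : ℝ), E t = 0) ∧
    (∀ s, T ≤ s → E s = 0) ∧ (∀ t, 0 < t → t < T → 0 < E t)

/-- The pseudometric `ρ_E(s,t) = E(s) + E(t) - 2 inf {E(r) : min s t ≤ r ≤ max s t}`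
encoded by an excursion `E`. -/
noncomputable def excDist (E : ℝ → ℝ) (s t : ℝ) : ℝ :=
  E s + E t - 2 * sInf (E '' Set.Icc (min s t) (max s t))

lemma exc_bdd {E : ℝ → ℝ} {T : ℝ} (h : IsExcursion E T) : ∃ M, ∀ t, E t ≤ M := by
  obtain ⟨hc, hT, h0, hl, hr, _⟩ := h
  obtain ⟨M, hM⟩ := (isCompact_Icc (a := (0:ℝ)) (b := T)).bddAbove_image hc.continuousOn
  have h1 : ∀ t ∈ Set.Icc (0:ℝ) T, E t ≤ M := fun t ht => hM ⟨t, ht, rfl⟩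
  have hM0 : 0 ≤ M := (h0 0).trans (h1 0 ⟨le_rfl, hT.le⟩)
  refine ⟨M, fun t => ?_⟩
  rcases le_total t 0 with h | h
  · rw [hl t h]; exact hM0
  rcases le_total t T with h' | h'
  · exact h1 t ⟨h, h'⟩
  · rw [hr t h']; exact hM0

lemma exc_sInf_le {E E' : ℝ → ℝ} (h0 : ∀ t, 0 ≤ E t) {δ : ℝ}
    (h : ∀ t, 0 ≤ t → |E t - E' t| ≤ δ) {a b : ℝ} (ha : 0 ≤ a) (hab : a ≤ b) :
    sInf (E '' Set.Icc a b) ≤ sInf (E' '' Set.Icc a b) + δ := by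
  have : sInf (E '' Set.Icc a b) - δ ≤ sInf (E' '' Set.Icc a b) := by
    apply le_csInf ((Set.nonempty_Icc.2 hab).image _)
    rintro _ ⟨r, hr, rfl⟩
    have h1 : sInf (E '' Set.Icc a b) ≤ E r :=
      csInf_le ⟨0, by rintro _ ⟨u, _, rfl⟩; exact h0 u⟩ ⟨r, hr, rfl⟩
    have := (abs_le.1 (h r (ha.trans hr.1))).2
    linarith
  linarith

lemma excDist_le {E E' : ℝ → ℝ} (h0' : ∀ t, 0 ≤ E' t) {δ : ℝ}
    (h : ∀ t, 0 ≤ t → |E t - E' t| ≤ δ) {s t : ℝ} (hs : 0 ≤ s) (ht : 0 ≤ t) :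
    excDist E s t ≤ excDist E' s t + 4 * δ := by
  have h2 := exc_sInf_le h0' (fun t ht => by rw [abs_sub_comm]; exact h t ht)
    (le_min hs ht) (min_le_max (a := s) (b := t))
  have a1 := (abs_le.1 (h s hs)).2
  have a2 := (abs_le.1 (h t ht)).2
  unfold excDist
  linarith

lemma excDist_abs {E E' : ℝ → ℝ} (h0 : ∀ t, 0 ≤ E t) (h0' : ∀ t, 0 ≤ E' t) {δ : ℝ}
    (h : ∀ t, 0 ≤ t → |E t - E' t| ≤ δ) {s t : ℝ} (hs : 0 ≤ s) (ht : 0 ≤ t) :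
    |excDist E s t - excDist E' s t| ≤ 4 * δ := by
  have h1 := excDist_le h0' h hs ht
  have h2 := excDist_le (E := E') (E' := E) h0
    (fun t ht => by rw [abs_sub_comm]; exact h t ht) hs ht
  rw [abs_le]; constructor <;> linarith

lemma exc_sInf_zero {E : ℝ → ℝ} (h0 : ∀ t, 0 ≤ E t) {a b r : ℝ} (hr : r ∈ Set.Icc a b)
    (hz : E r = 0) : sInf (E '' Set.Icc a b) = 0 := by
  apply le_antisymm
  · rw [← hz]
    exact csInf_le ⟨0, by rintro _ ⟨u, _, rfl⟩; exact h0 u⟩ ⟨r, hr, rfl⟩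
  · apply Real.sInf_nonneg
    rintro _ ⟨u, _, rfl⟩; exact h0 u

lemma excDist_clamp {E : ℝ → ℝ} {T : ℝ} (h : IsExcursion E T) (s t : ℝ) :
    excDist E (min s T) (min t T) = excDist E s t := by
  obtain ⟨hc, hT, h0, hl, hr, _⟩ := h
  have hm : ∀ s, E (min s T) = E s := by
    intro s
    rcases le_total s T with h | h
    · rw [min_eq_left h]
    · rw [min_eq_right h, hr s h, hr T le_rfl]
  by_cases hst : s ≤ T ∧ t ≤ T
  · rw [min_eq_left hst.1, min_eq_left hst.2]
  · have hmax : T ≤ max s t := by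
      by_contra hh
      push Not at hh
      exact hst ⟨((le_max_left _ _).trans_lt hh).le, ((le_max_right _ _).trans_lt hh).le⟩
    have hmax' : max (min s T) (min t T) = T := by
      rw [← min_max_distrib_right, min_eq_right hmax]
    unfold excDist
    rw [hm, hm, exc_sInf_zero h0 (r := max s t) ⟨min_le_max, le_rfl⟩ (hr _ hmax),
      exc_sInf_zero h0 (r := T) ⟨min_le_max.trans hmax'.le, hmax'.ge⟩ (hr _ le_rfl)]

/-- If two excursions are uniformly within `δ` of each other, the Gromov–Hausdorff distance
between the metric quotients of `([0,T(E)], ρ_E)` and `([0,T(Ẽ)], ρ_Ẽ)` is at most `8δ`.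
The metric quotients are characterised as compact metric spaces `X`, `Y` together with
surjective maps `qE`, `qE'` from the respective intervals realising the pseudometrics. -/
theorem stmt_10 {E E' : ℝ → ℝ} {TE TE' : ℝ} (hE : IsExcursion E TE)
    (hE' : IsExcursion E' TE')
    {X Y : Type*} [MetricSpace X] [CompactSpace X] [Nonempty X]
    [MetricSpace Y] [CompactSpace Y] [Nonempty Y]
    (qE : ℝ → X) (qE' : ℝ → Y)
    (hqE_surj : ∀ p : X, ∃ t ∈ Set.Icc (0 : ℝ) TE, qE t = p)
    (hqE_dist : ∀ s ∈ Set.Icc (0 : ℝ) TE, ∀ t ∈ Set.Icc (0 : ℝ) TE,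
      dist (qE s) (qE t) = excDist E s t)
    (hqE'_surj : ∀ p : Y, ∃ t ∈ Set.Icc (0 : ℝ) TE', qE' t = p)
    (hqE'_dist : ∀ s ∈ Set.Icc (0 : ℝ) TE', ∀ t ∈ Set.Icc (0 : ℝ) TE',
      dist (qE' s) (qE' t) = excDist E' s t)
    {δ : ℝ} (hδ : 0 < δ)
    (hsup : (⨆ t : Set.Ici (0 : ℝ), |E t.1 - E' t.1|) < δ) :
    GromovHausdorff.ghDist X Y ≤ 8 * δ := by
  have hb : BddAbove (Set.range fun t : Set.Ici (0 : ℝ) => |E t.1 - E' t.1|) := by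
    obtain ⟨M, hM⟩ := exc_bdd hE
    obtain ⟨M', hM'⟩ := exc_bdd hE'
    refine ⟨M + M', ?_⟩
    rintro _ ⟨t, rfl⟩
    have h1 := hM t.1
    have h2 := hM' t.1
    have h3 := hE.2.2.1 t.1
    have h4 := hE'.2.2.1 t.1
    show |E t.1 - E' t.1| ≤ M + M'
    rw [abs_le]; constructor <;> linarith
  have hd : ∀ t, 0 ≤ t → |E t - E' t| ≤ δ := fun t ht =>
    (le_ciSup hb (⟨t, ht⟩ : Set.Ici (0 : ℝ))).trans hsup.le
  have hT := hE.2.1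
  have hT' := hE'.2.1
  have hX : ∀ s t, 0 ≤ s → 0 ≤ t →
      dist (qE (min s TE)) (qE (min t TE)) = excDist E s t := fun s t hs ht => by
    rw [hqE_dist _ ⟨le_min hs hT.le, min_le_right _ _⟩ _ ⟨le_min ht hT.le, min_le_right _ _⟩,
      excDist_clamp hE]
  have hY : ∀ s t, 0 ≤ s → 0 ≤ t →
      dist (qE' (min s TE')) (qE' (min t TE')) = excDist E' s t := fun s t hs ht => by
    rw [hqE'_dist _ ⟨le_min hs hT'.le, min_le_right _ _⟩ _ ⟨le_min ht hT'.le, min_le_right _ _⟩,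
      excDist_clamp hE']
  choose τ hτ hτq using hqE_surj
  have hτq' : ∀ x, qE (min (τ x) TE) = x := fun x => by rw [min_eq_left (hτ x).2, hτq]
  have hkey : ∀ s t, 0 ≤ s → 0 ≤ t → |dist (qE (min s TE)) (qE (min t TE)) -
      dist (qE' (min s TE')) (qE' (min t TE'))| ≤ 4 * δ := fun s t hs ht => by
    rw [hX s t hs ht, hY s t hs ht]
    exact excDist_abs hE.2.2.1 hE'.2.2.1 hd hs ht
  have := GromovHausdorff.ghDist_le_of_approx_subsets (X := X) (Y := Y) (s := Set.univ)
    (fun x => qE' (min (τ x.1) TE')) (ε₁ := 0) (ε₂ := 4 * δ) (ε₃ := 4 * δ)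
    (fun x => ⟨x, Set.mem_univ _, (dist_self x).le⟩)
    (fun y => by
      obtain ⟨t, ht, rfl⟩ := hqE'_surj y
      refine ⟨⟨qE (min t TE), Set.mem_univ _⟩, ?_⟩
      have h := hkey t (τ (qE (min t TE))) ht.1 (hτ _).1
      rw [hτq', dist_self, zero_sub, abs_neg, abs_of_nonneg dist_nonneg, min_eq_left ht.2] at h
      exact h)
    (fun x y => by
      have h := hkey (τ x.1) (τ y.1) (hτ _).1 (hτ _).1
      rw [hτq', hτq'] at h
      exact h)
  linarith
end

section
/- Let E be an excursion of lifetime 1 and let s ∈ (0,1). Define f_sE : [0,1] → [0,∞) by f_sE(t) = ρ_E(s, s+t) for t ∈ [0, 1−s] and f_sE(t) = ρ_E(s, s+t−1) for t ∈ [1−s, 1], and define u : [0,1] → [0,1] by u(t) = s+t for t ∈ [0, 1−s] and u(t) = s+t−1 for t ∈ [1−s, 1]. Then for all t₁, t₂ ∈ [0,1] one has ρ_{f_sE}(t₁, t₂) = ρ_E(u(t₁), u(t₂)), where ρ_{f_sE}(t₁,t₂) := f_sE(t₁) + f_sE(t₂) − 2·inf{f_sE(r) : min(t₁,t₂) ≤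 r ≤ max(t₁,t₂)}. -/
noncomputable def mmI (E : ℝ → ℝ) (a b : ℝ) : ℝ := sInf (E '' Set.Icc a b)

lemma mmI_least {E : ℝ → ℝ} (hE : Continuous E) {a b : ℝ} (h : a ≤ b) :
    IsLeast (E '' Set.Icc a b) (mmI E a b) :=
  (isCompact_Icc.image hE).isLeast_sInf ((Set.nonempty_Icc.2 h).image E)

lemma mmI_le {E : ℝ → ℝ} (hE : Continuous E) {a b r : ℝ} (h1 : a ≤ r) (h2 : r ≤ b) :
    mmI E a b ≤ E r :=
  (mmI_least hE (h1.trans h2)).2 ⟨r, ⟨h1, h2⟩, rfl⟩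

lemma mmI_att {E : ℝ → ℝ} (hE : Continuous E) {a b : ℝ} (h : a ≤ b) :
    ∃ r, a ≤ r ∧ r ≤ b ∧ E r = mmI E a b := by
  obtain ⟨r, hr, h⟩ := (mmI_least hE h).1
  exact ⟨r, hr.1, hr.2, h⟩

lemma mmI_split {E : ℝ → ℝ} (hE : Continuous E) {a b c : ℝ} (h1 : a ≤ b) (h2 : b ≤ c) :
    mmI E a c = min (mmI E a b) (mmI E b c) := by
  apply le_antisymm
  · obtain ⟨r, h3, h4, h5⟩ := mmI_att hE h1
    obtain ⟨q, h6, h7, h8⟩ := mmI_att hE h2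
    rw [← h5, ← h8]
    exact le_min (mmI_le hE h3 (h4.trans h2)) (mmI_le hE (h1.trans h6) h7)
  · obtain ⟨r, h3, h4, h5⟩ := mmI_att hE (h1.trans h2)
    rw [← h5]
    rcases le_total r b with h | h
    · exact (min_le_left _ _).trans (mmI_le hE h3 h)
    · exact (min_le_right _ _).trans (mmI_le hE h h4)

lemma first_hit {E : ℝ → ℝ} (hE : Continuous E) {a b c : ℝ} (hab : a ≤ b) (ha : c ≤ E a)
    (hm : mmI E a b ≤ c) : ∃ r, a ≤ r ∧ r ≤ b ∧ E r = c ∧ mmI E a r = c := by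
  have hK : IsCompact (Set.Icc a b ∩ {r | E r ≤ c}) :=
    isCompact_Icc.inter_right (isClosed_le hE continuous_const)
  obtain ⟨q, h1, h2, h3⟩ := mmI_att hE hab
  obtain ⟨r, hr⟩ := hK.exists_isLeast ⟨q, ⟨h1, h2⟩, h3.trans_le hm⟩
  obtain ⟨⟨⟨har, hrb⟩, hrc⟩, hl⟩ := hr
  have hrc : E r ≤ c := hrc
  have hEr : E r = c := by
    obtain ⟨x, hx, hxc⟩ := intermediate_value_Icc' har hE.continuousOn ⟨hrc, ha⟩
    have := hl ⟨⟨hx.1, hx.2.trans hrb⟩, hxc.le⟩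
    have : r = x := le_antisymm this hx.2
    rw [this, hxc]
  refine ⟨r, har, hrb, hEr, le_antisymm (hEr ▸ mmI_le hE har le_rfl) ?_⟩
  obtain ⟨x, hx1, hx2, hx3⟩ := mmI_att hE har
  rw [← hx3]
  by_contra! hlt
  have := hl ⟨⟨hx1, hx2.trans hrb⟩, hlt.le⟩
  have : r = x := le_antisymm this hx2
  rw [← this, hEr] at hlt
  exact lt_irrefl _ hlt

lemma right_least {E : ℝ → ℝ} (hE : Continuous E) {s a b : ℝ} (hsa : s ≤ a) (hab : a ≤ b) :
    IsLeast ((fun r => E r - 2 * mmI E s r) '' Set.Icc a b)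
      (mmI E a b - mmI E s a - mmI E s b) := by
  have hb := mmI_split hE hsa hab
  constructor
  · rcases le_total (mmI E s a) (mmI E a b) with h | h
    · obtain ⟨r, h1, h2, h3⟩ := mmI_att hE hab
      refine ⟨r, ⟨h1, h2⟩, ?_⟩
      have e1 := mmI_split hE hsa h1
      have e2 := mmI_split hE h1 h2
      have e3 : mmI E a b ≤ mmI E a r := by rw [e2]; exact min_le_left _ _
      rw [min_eq_left h] at hb
      rw [min_eq_left (h.trans e3)] at e1
      simp only [h3, e1, hb]; ring
    · obtain ⟨r, h1, h2, h3, h4⟩ := first_hit hE hab (mmI_le hE hsa le_rfl) h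
      refine ⟨r, ⟨h1, h2⟩, ?_⟩
      have e1 := mmI_split hE hsa h1
      rw [h4, min_self] at e1
      rw [min_eq_right h] at hb
      simp only [h3, e1, hb]; ring
  · rintro _ ⟨r, ⟨h1, h2⟩, rfl⟩
    have e1 := mmI_split hE hsa h1
    have e3 := mmI_le hE h1 h2
    have e4 := mmI_le hE (hsa.trans h1) (le_refl r)
    have e5 : mmI E s r ≤ mmI E s a := by rw [e1]; exact min_le_left _ _
    rcases le_total (mmI E s a) (mmI E a b) with h | h
    · rw [min_eq_left h] at hb
      simp only; linarith
    · rw [min_eq_right h] at hb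
      simp only; linarith

lemma mmI_neg (E : ℝ → ℝ) (a b : ℝ) : mmI (fun x => E (-x)) (-b) (-a) = mmI E a b := by
  unfold mmI
  congr 1
  ext y
  constructor
  · rintro ⟨x, hx, rfl⟩
    exact ⟨-x, ⟨by linarith [hx.2], by linarith [hx.1]⟩, rfl⟩
  · rintro ⟨x, hx, rfl⟩
    exact ⟨-x, ⟨by linarith [hx.2], by linarith [hx.1]⟩, by simp⟩

lemma left_least {E : ℝ → ℝ} (hE : Continuous E) {s a b : ℝ} (hab : a ≤ b) (hbs : b ≤ s) :
    IsLeast ((fun r => E r - 2 * mmI E r s) '' Set.Icc a b)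
      (mmI E a b - mmI E a s - mmI E b s) := by
  have h := right_least (E := fun x => E (-x)) (by fun_prop) (neg_le_neg hbs) (neg_le_neg hab)
  simp only [mmI_neg] at h
  convert h using 1
  · ext y
    constructor
    · rintro ⟨x, hx, rfl⟩
      exact ⟨-x, ⟨by linarith [hx.2], by linarith [hx.1]⟩, by simp [mmI_neg]⟩
    · rintro ⟨x, hx, rfl⟩
      refine ⟨-x, ⟨by linarith [hx.2], by linarith [hx.1]⟩, ?_⟩
      have := mmI_neg E (-x) s
      rw [neg_neg] at this
      simp [this]
  · ring

lemma excDist_le_s11 (E : ℝ → ℝ) {a b : ℝ} (h : a ≤ b) :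
    excDist E a b = E a + E b - 2 * mmI E a b := by
  simp [excDist, mmI, h]

lemma excDist_comm' (E : ℝ → ℝ) (a b : ℝ) : excDist E a b = excDist E b a := by
  simp only [excDist, min_comm a b, max_comm a b]; ring

lemma stmt_le {E : ℝ → ℝ} (hE : IsExcursion E 1) {s : ℝ} (hs : s ∈ Set.Ioo (0 : ℝ) 1)
    (t₁ : ℝ) (h0 : 0 ≤ t₁) (t₂ : ℝ) (h12 : t₁ ≤ t₂) (h1 : t₂ ≤ 1) :
      excDist (fun t => if t ≤ 1 - s then excDist E s (s + t) else excDist E s (s + t - 1))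
          t₁ t₂ =
        excDist E (if t₁ ≤ 1 - s then s + t₁ else s + t₁ - 1)
          (if t₂ ≤ 1 - s then s + t₂ else s + t₂ - 1) := by
  obtain ⟨hc, -, hnn, hz0, hz1, -⟩ := hE
  obtain ⟨hs0, hs1⟩ := hs
  set f : ℝ → ℝ := fun t => if t ≤ 1 - s then excDist E s (s + t) else excDist E s (s + t - 1)
    with hf
  have fr : ∀ t, 0 ≤ t → t ≤ 1 - s → f t = E s + (E (s + t) - 2 * mmI E s (s + t)) := by
    intro t ht ht'
    simp only [hf, if_pos ht', excDist_le_s11 E (show s ≤ s + t by linarith)]; ring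
  have fl : ∀ t, 1 - s < t → t ≤ 1 →
      f t = E s + (E (s + t - 1) - 2 * mmI E (s + t - 1) s) := by
    intro t ht ht'
    simp only [hf, if_neg ht.not_ge, excDist_comm' E s,
      excDist_le_s11 E (show s + t - 1 ≤ s by linarith)]; ring
  have key : ∀ c, IsLeast (f '' Set.Icc t₁ t₂) c → mmI f t₁ t₂ = c := fun c h => h.csInf_eq
  rw [excDist_le_s11 f h12]
  rcases le_or_gt t₂ (1 - s) with hb | hb
  · have ha := h12.trans hb
    rw [if_pos ha, if_pos hb, excDist_le_s11 E (show s + t₁ ≤ s + t₂ by linarith),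
      fr t₁ h0 ha, fr t₂ (h0.trans h12) hb]
    obtain ⟨⟨r, hr, hr'⟩, hl⟩ := right_least hc (show s ≤ s + t₁ by linarith)
      (show s + t₁ ≤ s + t₂ by linarith)
    rw [key (E s + (mmI E (s + t₁) (s + t₂) - mmI E s (s + t₁) - mmI E s (s + t₂)))]
    · ring
    · constructor
      · refine ⟨r - s, ⟨by linarith [hr.1], by linarith [hr.2]⟩, ?_⟩
        rw [fr _ (by linarith [hr.1]) (by linarith [hr.2]), ← hr']
        simp
      · rintro _ ⟨x, hx, rfl⟩
        rw [fr _ (h0.trans hx.1) (hx.2.trans hb)]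
        have := hl ⟨s + x, ⟨by linarith [hx.1], by linarith [hx.2]⟩, rfl⟩
        simpa using this
  rcases le_or_gt t₁ (1 - s) with ha | ha
  · rw [if_pos ha, if_neg hb.not_ge, excDist_comm' E,
      excDist_le_s11 E (show s + t₂ - 1 ≤ s + t₁ by linarith), fr t₁ h0 ha, fl t₂ hb h1]
    have z : ∀ a b, a ≤ b → (E a = 0 ∨ E b = 0) → mmI E a b = 0 := by
      intro a b hab h
      apply le_antisymm
      · rcases h with h | h
        · exact h ▸ mmI_le hc le_rfl hab
        · exact h ▸ mmI_le hc hab le_rfl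
      · obtain ⟨r, _, _, h⟩ := mmI_att hc hab
        exact h ▸ hnn r
    have R := right_least hc (show s ≤ s + t₁ by linarith) (show s + t₁ ≤ 1 by linarith)
    have L := left_least hc (show 0 ≤ s + t₂ - 1 by linarith) (show s + t₂ - 1 ≤ s by linarith)
    have E1 := hz1 1 le_rfl
    have E0 := hz0 0 le_rfl
    rw [z _ 1 (by linarith) (Or.inr E1), z s 1 hs1.le (Or.inr E1)] at R
    rw [z 0 _ (by linarith) (Or.inl E0), z 0 s hs0.le (Or.inl E0)] at L
    have f0 : f (1 - s) = E s := by
      rw [fr _ (by linarith) le_rfl]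
      rw [show s + (1 - s) = 1 by ring, E1, z s 1 hs1.le (Or.inr E1)]; ring
    have hsp := mmI_split hc (show s + t₂ - 1 ≤ s by linarith) (show s ≤ s + t₁ by linarith)
    rw [key (E s + min (0 - mmI E s (s + t₁) - 0) (0 - 0 - mmI E (s + t₂ - 1) s))]
    · rw [hsp]
      rcases le_total (mmI E (s + t₂ - 1) s) (mmI E s (s + t₁)) with h | h
      · rw [min_eq_left h, min_eq_left (by linarith)]; ring
      · rw [min_eq_right h, min_eq_right (by linarith)]; ring
    · obtain ⟨⟨r, hr, hr'⟩, hl⟩ := R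
      obtain ⟨⟨q, hq, hq'⟩, hk⟩ := L
      constructor
      · rcases min_choice (0 - mmI E s (s + t₁) - 0) (0 - 0 - mmI E (s + t₂ - 1) s) with h | h
        · rw [h]
          refine ⟨r - s, ⟨by linarith [hr.1], by linarith [hr.2]⟩, ?_⟩
          rw [fr _ (by linarith [hr.1]) (by linarith [hr.2]), ← hr']
          simp
        · rw [h, ← hq']
          rcases hq.1.eq_or_lt with h | h
          · refine ⟨1 - s, ⟨ha, hb.le⟩, ?_⟩
            rw [f0, ← h]
            simp [E0, z 0 s hs0.le (Or.inl E0)]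
          · refine ⟨q + 1 - s, ⟨by linarith [hq.1], by linarith [hq.2]⟩, ?_⟩
            rw [fl _ (by linarith) (by linarith [hq.2])]
            rw [show s + (q + 1 - s) - 1 = q by ring]
      · rintro _ ⟨x, hx, rfl⟩
        rcases le_or_gt x (1 - s) with h | h
        · rw [fr _ (h0.trans hx.1) h]
          have := hl ⟨s + x, ⟨by linarith [hx.1], by linarith [hx.2]⟩, rfl⟩
          have h3 := (min_le_left _ (0 - 0 - mmI E (s + t₂ - 1) s)).trans this
          simp only at h3
          linarith
        · rw [fl _ h (hx.2.trans h1)]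
          have := hk ⟨s + x - 1, ⟨by linarith [hx.1], by linarith [hx.2]⟩, rfl⟩
          have h3 := (min_le_right (0 - mmI E s (s + t₁) - 0) _).trans this
          simp only at h3
          linarith
  · rw [if_neg ha.not_ge, if_neg hb.not_ge,
      excDist_le_s11 E (show s + t₁ - 1 ≤ s + t₂ - 1 by linarith),
      fl t₁ ha (h12.trans h1), fl t₂ hb h1]
    obtain ⟨⟨r, hr, hr'⟩, hl⟩ := left_least hc
      (show s + t₁ - 1 ≤ s + t₂ - 1 by linarith) (show s + t₂ - 1 ≤ s by linarith)
    rw [key (E s + (mmI E (s + t₁ - 1) (s + t₂ - 1) - mmI E (s + t₁ - 1) s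
      - mmI E (s + t₂ - 1) s))]
    · ring
    · constructor
      · refine ⟨r + 1 - s, ⟨by linarith [hr.1], by linarith [hr.2]⟩, ?_⟩
        rw [fl _ (by linarith [hr.1]) (by linarith [hr.2]), ← hr']
        rw [show s + (r + 1 - s) - 1 = r by ring]
      · rintro _ ⟨x, hx, rfl⟩
        rw [fl _ (ha.trans_le hx.1) (hx.2.trans h1)]
        have := hl ⟨s + x - 1, ⟨by linarith [hx.1], by linarith [hx.2]⟩, rfl⟩
        simp only at this
        linarith

/-- The rerooting identity: for an excursion `E` of lifetime `1` and `s ∈ (0,1)`, the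
pseudometric of the rerooted excursion `f_sE` agrees with the original pseudometric under
the cyclic time shift `u`. -/
theorem stmt_11 {E : ℝ → ℝ} (hE : IsExcursion E 1) {s : ℝ} (hs : s ∈ Set.Ioo (0 : ℝ) 1) :
    ∀ t₁ ∈ Set.Icc (0 : ℝ) 1, ∀ t₂ ∈ Set.Icc (0 : ℝ) 1,
      excDist (fun t => if t ≤ 1 - s then excDist E s (s + t) else excDist E s (s + t - 1))
          t₁ t₂ =
        excDist E (if t₁ ≤ 1 - s then s + t₁ else s + t₁ - 1)
          (if t₂ ≤ 1 - s then s + t₂ else s + t₂ - 1) := by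
  intro t₁ h₁ t₂ h₂
  rcases le_total t₁ t₂ with h | h
  · exact stmt_le hE hs t₁ h₁.1 t₂ h h₂.2
  · rw [excDist_comm', excDist_comm' E (if t₁ ≤ 1 - s then s + t₁ else s + t₁ - 1)]
    exact stmt_le hE hs t₂ h₂.1 t₁ h h₁.2
end

section
/- Let (T, ρ) be a continuum tree equipped with a finite Borel measure λ. Let x, y ∈ T be distinct, set ℓ = ρ(x,y), let δ ∈ (0, ℓ), and let z be the unique point of [[x,y]] with ρ(x,z) = δ/2. Then ∫_{B_δ(x)} ρ(σ,y) dλ(σ) ≥ λ(B_δ(x) ∖ B_{δ/2}(z))·ℓ + (δ/2)·λ(O_δ(x,y) ∖ O_{δ/2}(x,y)) + ∫_{B_{δ/2}(z)} ρ(σ,y) dλ(σ). -/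
/-- The offspring part `O_δ(x,y) = B_δ(x) ∩ (T ∖ T^x(y))` of the ball `B_δ(x)` relative
to `y`, where `T^x(y)` is the connected component of `T ∖ {x}` containing `y`. -/
def offspringPart {T : Type*} [MetricSpace T] (δ : ℝ) (x y : T) : Set T :=
  Metric.ball x δ ∩ (connectedComponentIn {x}ᶜ y)ᶜ

theorem seg_dist {T : Type*} [MetricSpace T] [CompactSpace T] (ct : ContinuumTree T)
    {x y w : T} (hw : w ∈ ct.geodesic x y '' Set.Icc 0 (dist x y)) :
    dist x y = dist x w + dist w y := by
  obtain ⟨s, hs, rfl⟩ := hw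
  have h0 : (0 : ℝ) ∈ Set.Icc (0 : ℝ) (dist x y) := ⟨le_rfl, dist_nonneg⟩
  have h1 : dist x y ∈ Set.Icc (0 : ℝ) (dist x y) := ⟨dist_nonneg, le_rfl⟩
  have e1 := ct.geodesic_isometry x y 0 h0 s hs
  have e2 := ct.geodesic_isometry x y s hs _ h1
  rw [ct.geodesic_source] at e1
  rw [ct.geodesic_target] at e2
  rw [e1, e2, abs_of_nonpos (by linarith [hs.1]), abs_of_nonpos (by linarith [hs.2])]
  ring

theorem geo_cont {T : Type*} [MetricSpace T] {g : ℝ → T} {L : ℝ}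
    (hg : ∀ s ∈ Set.Icc (0 : ℝ) L, ∀ t ∈ Set.Icc (0 : ℝ) L, dist (g s) (g t) = |s - t|) :
    ContinuousOn g (Set.Icc 0 L) := by
  have : LipschitzOnWith 1 g (Set.Icc 0 L) :=
    LipschitzOnWith.of_dist_le_mul fun s hs t ht => by
      rw [hg s hs t ht, Real.dist_eq]; simp
  exact this.continuousOn

theorem concat_dist {T : Type*} [MetricSpace T] [CompactSpace T] (ct : ContinuumTree T)
    (σ : T) (p : ℝ → T) (L : ℝ) (hL : 0 ≤ L)
    (hp : ∀ s ∈ Set.Icc (0 : ℝ) L, ∀ t ∈ Set.Icc (0 : ℝ) L, dist (p s) (p t) = |s - t|)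
    (hmin : ∀ t ∈ Set.Icc (0 : ℝ) L, dist σ (p 0) ≤ dist σ (p t))
    (b : ℝ) (hb : b ∈ Set.Icc (0 : ℝ) L) :
    dist σ (p L) = dist σ (p b) + (L - b) := by
  set h := dist σ (p 0) with hh
  have hh0 : 0 ≤ h := dist_nonneg
  rcases eq_or_lt_of_le (add_nonneg hh0 hL) with h0 | hpos
  · have hL0 : L = 0 := by linarith
    have hb0 : b = 0 := le_antisymm (by linarith [hb.2]) hb.1
    subst hb0; rw [hL0]; simp
  set g := ct.geodesic σ (p 0) with hg
  have giso := ct.geodesic_isometry σ (p 0)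
  have g0 : g 0 = σ := ct.geodesic_source _ _
  have gh : g h = p 0 := ct.geodesic_target _ _
  rw [← hg, ← hh] at giso
  have m0 : (0 : ℝ) ∈ Set.Icc (0 : ℝ) L := ⟨le_rfl, hL⟩
  have mL : L ∈ Set.Icc (0 : ℝ) L := ⟨hL, le_rfl⟩
  set G : ℝ → T := Set.IccExtend hh0 ((Set.Icc 0 h).restrict g) with hG
  set P : ℝ → T := Set.IccExtend hL ((Set.Icc 0 L).restrict p) with hP
  have Gc : Continuous G := (continuousOn_iff_continuous_restrict.1 (geo_cont giso)).Icc_extend'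
  have Pc : Continuous P := (continuousOn_iff_continuous_restrict.1 (geo_cont hp)).Icc_extend'
  have Ge : ∀ s ∈ Set.Icc (0 : ℝ) h, G s = g s := fun s hs => by
    rw [hG, Set.IccExtend_of_mem _ _ hs]; rfl
  have Pe : ∀ s ∈ Set.Icc (0 : ℝ) L, P s = p s := fun s hs => by
    rw [hP, Set.IccExtend_of_mem _ _ hs]; rfl
  set f : ℝ → T := fun s => if s ≤ h then G s else P (s - h) with hf
  have fc : Continuous f := by
    refine Continuous.if_le Gc (Pc.comp (continuous_id.sub continuous_const)) continuous_id
      continuous_const ?_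
    intro s hs
    subst hs
    rw [Ge _ ⟨hh0, le_rfl⟩]
    simp only [Function.comp, id, sub_self]
    rw [Pe _ m0, gh]
  have f1 : ∀ s, 0 ≤ s → s ≤ h → f s = g s := fun s h1 h2 => by
    simp only [hf, if_pos h2]; exact Ge s ⟨h1, h2⟩
  have f2 : ∀ s, h < s → s ≤ h + L → f s = p (s - h) := fun s h1 h2 => by
    simp only [hf, if_neg (not_le.2 h1)]; exact Pe _ ⟨by linarith, by linarith⟩
  have cross : ∀ s t, 0 ≤ s → s ≤ h → h < t → t ≤ h + L → f s ≠ f t := by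
    intro s t s0 sh ht tL e
    rw [f1 s s0 sh, f2 t ht tL] at e
    have tm : t - h ∈ Set.Icc (0 : ℝ) L := ⟨by linarith, by linarith⟩
    have h1 := hmin _ tm
    have h2 := giso 0 ⟨le_rfl, hh0⟩ s ⟨s0, sh⟩
    rw [g0, e, abs_of_nonpos (by linarith)] at h2
    have hs : s = h := by linarith
    rw [hs, gh] at e
    have h3 := hp 0 m0 _ tm
    rw [← e, dist_self, abs_of_nonpos (by linarith)] at h3
    linarith
  have finj : ∀ s ∈ Set.Icc (0 : ℝ) (h + L), ∀ t ∈ Set.Icc (0 : ℝ) (h + L), f s = f t → s = t := by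
    intro s hs t ht e
    rcases le_or_gt s h with h1 | h1 <;> rcases le_or_gt t h with h2 | h2
    · rw [f1 s hs.1 h1, f1 t ht.1 h2] at e
      have := giso s ⟨hs.1, h1⟩ t ⟨ht.1, h2⟩
      rw [e, dist_self] at this
      linarith [abs_eq_zero.1 this.symm]
    · exact absurd e (cross s t hs.1 h1 h2 ht.2)
    · exact absurd e.symm (cross t s ht.1 h2 h1 hs.2)
    · rw [f2 s h1 hs.2, f2 t h2 ht.2] at e
      have := hp (s - h) ⟨by linarith, by linarith [hs.2]⟩ (t - h) ⟨by linarith, by linarith [ht.2]⟩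
      rw [e, dist_self] at this
      linarith [abs_eq_zero.1 this.symm]
  have fp : ∀ c ∈ Set.Icc (0 : ℝ) L, f (h + c) = p c := by
    intro c hc
    rcases eq_or_lt_of_le hc.1 with h1 | h1
    · rw [← h1, add_zero, f1 h hh0 le_rfl, gh]
    · rw [f2 _ (by linarith) (by linarith [hc.2])]; congr 1; ring
  let γ : Path σ (p L) :=
    { toFun := fun t => f ((t : ℝ) * (h + L))
      continuous_toFun := fc.comp (continuous_subtype_val.mul continuous_const)
      source' := by
        change f (((0 : unitInterval) : ℝ) * (h + L)) = σ
        rw [Set.Icc.coe_zero, zero_mul, f1 0 le_rfl hh0, g0]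
      target' := by
        change f (((1 : unitInterval) : ℝ) * (h + L)) = p L
        rw [Set.Icc.coe_one, one_mul, fp L mL] }
  have γe : ∀ t : unitInterval, γ t = f ((t : ℝ) * (h + L)) := fun t => rfl
  have γinj : Function.Injective ⇑γ := by
    intro s t e
    rw [γe, γe] at e
    have hm : ∀ t : unitInterval, (t : ℝ) * (h + L) ∈ Set.Icc (0 : ℝ) (h + L) := fun t =>
      ⟨mul_nonneg t.2.1 hpos.le, mul_le_of_le_one_left hpos.le t.2.2⟩
    have := finj _ (hm s) _ (hm t) e
    exact Subtype.ext (mul_right_cancel₀ hpos.ne' this)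
  have hr := ct.path_image _ _ γ γinj
  have hbm : p b ∈ Set.range ⇑γ := by
    refine ⟨⟨(h + b) / (h + L), ?_, ?_⟩, ?_⟩
    · exact div_nonneg (by linarith [hb.1]) hpos.le
    · exact (div_le_one hpos).2 (by linarith [hb.2])
    · rw [γe]
      simp only
      rw [div_mul_cancel₀ _ hpos.ne', fp b hb]
  rw [hr] at hbm
  rw [seg_dist ct hbm, hp b hb L mL, abs_of_nonpos (by linarith [hb.2])]
  ring

theorem tripod {T : Type*} [MetricSpace T] [CompactSpace T] (ct : ContinuumTree T)
    {x y z : T} (σ : T) (hz : z ∈ ct.geodesic x y '' Set.Icc 0 (dist x y)) :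
    dist σ y = dist σ z + dist z y ∨ dist σ x = dist σ z + dist z x := by
  obtain ⟨b, hb, rfl⟩ := hz
  have giso := ct.geodesic_isometry x y
  have hs := ct.geodesic_source x y
  have ht := ct.geodesic_target x y
  set γ := ct.geodesic x y
  have hD : (0 : ℝ) ≤ dist x y := dist_nonneg
  obtain ⟨a, ha, hmin⟩ := isCompact_Icc.exists_isMinOn (Set.nonempty_Icc.2 hD)
    (f := fun t => dist σ (γ t)) (Continuous.comp_continuousOn (continuous_const.dist continuous_id) (geo_cont giso))
  have hmin' : ∀ t ∈ Set.Icc (0 : ℝ) (dist x y), dist σ (γ a) ≤ dist σ (γ t) := fun t ht => hmin ht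
  rcases le_total a b with hab | hab
  · left
    have := concat_dist ct σ (fun t => γ (a + t)) (dist x y - a) (by linarith [ha.2])
      (fun s hs t ht => by
        rw [giso _ ⟨by linarith [ha.1, hs.1], by linarith [hs.2]⟩ _
          ⟨by linarith [ha.1, ht.1], by linarith [ht.2]⟩]; congr 1; ring)
      (fun t ht => by
        simp only [add_zero]
        exact hmin' _ ⟨by linarith [ha.1, ht.1], by linarith [ht.2]⟩)
      (b - a) ⟨by linarith, by linarith [hb.2]⟩
    simp only [add_sub_cancel] at this
    have e := giso b hb _ ⟨hD, le_rfl⟩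
    rw [ht] at this e
    rw [this, e, abs_of_nonpos (by linarith [hb.2])]
    ring
  · right
    have := concat_dist ct σ (fun t => γ (a - t)) a ha.1
      (fun s hs t ht => by
        rw [giso _ ⟨by linarith [hs.2], by linarith [ha.2, hs.1]⟩ _
          ⟨by linarith [ht.2], by linarith [ha.2, ht.1]⟩, abs_sub_comm]; congr 1; ring)
      (fun t ht => by
        simp only [sub_zero]
        exact hmin' _ ⟨by linarith [ht.2], by linarith [ha.2, ht.1]⟩)
      (a - b) ⟨by linarith, by linarith [hb.1]⟩
    simp only [sub_self, sub_sub_cancel] at this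
    have e := giso b hb _ ⟨le_rfl, hD⟩
    rw [hs] at this e
    rw [this, e, abs_of_nonneg (by linarith [hb.1])]
    ring

theorem offspring_dist {T : Type*} [MetricSpace T] [CompactSpace T] (ct : ContinuumTree T)
    {x y σ : T} (h : σ ∉ connectedComponentIn {x}ᶜ y) :
    dist σ y = dist σ x + dist x y := by
  by_contra hne
  apply h
  have hx : x ∉ ct.geodesic σ y '' Set.Icc 0 (dist σ y) := fun hx => hne (seg_dist ct hx)
  have hc : IsPreconnected (ct.geodesic σ y '' Set.Icc 0 (dist σ y)) :=
    isPreconnected_Icc.image _ (geo_cont (ct.geodesic_isometry σ y))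
  have h1 : y ∈ ct.geodesic σ y '' Set.Icc 0 (dist σ y) :=
    ⟨_, ⟨dist_nonneg, le_rfl⟩, ct.geodesic_target _ _⟩
  have h2 : σ ∈ ct.geodesic σ y '' Set.Icc 0 (dist σ y) :=
    ⟨_, ⟨le_rfl, dist_nonneg⟩, ct.geodesic_source _ _⟩
  refine hc.subset_connectedComponentIn h1 ?_ h2
  intro w hw hwx
  exact hx (Set.mem_singleton_iff.1 hwx ▸ hw)

open MeasureTheory in
/-- The recursive lower bound for `∫_{B_δ(x)} ρ(σ,y) dλ(σ)` in a continuum tree. -/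
theorem stmt_12 {T : Type*} [MetricSpace T] [CompactSpace T]
    [MeasurableSpace T] [BorelSpace T] (ct : ContinuumTree T)
    (lam : Measure T) [IsFiniteMeasure lam]
    {x y : T} (hxy : x ≠ y) {δ : ℝ} (hδ0 : 0 < δ) (hδℓ : δ < dist x y)
    {z : T} (hz : z ∈ ct.seg x y) (hzd : dist x z = δ / 2) :
    (lam (Metric.ball x δ \ Metric.ball z (δ / 2))).toReal * dist x y
        + (δ / 2) * (lam (offspringPart δ x y \ offspringPart (δ / 2) x y)).toReal
        + ∫ σ in Metric.ball z (δ / 2), dist σ y ∂lam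
      ≤ ∫ σ in Metric.ball x δ, dist σ y ∂lam := by
  have hzs : dist x y = dist x z + dist z y := seg_dist ct hz
  set ℓ := dist x y with hℓ
  have hsub : Metric.ball z (δ / 2) ⊆ Metric.ball x δ :=
    Metric.ball_subset_ball' (by rw [dist_comm z x, hzd]; linarith)
  set A := Metric.ball x δ \ Metric.ball z (δ / 2) with hA
  have hAm : MeasurableSet A := measurableSet_ball.diff measurableSet_ball
  set S := A ∩ {σ | ℓ + δ / 2 ≤ dist σ y} with hS
  have hSm : MeasurableSet S := hAm.inter
    (isClosed_le continuous_const (continuous_id.dist continuous_const)).measurableSet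
  have hOS : offspringPart δ x y \ offspringPart (δ / 2) x y ⊆ S := by
    rintro σ ⟨⟨h1, h2⟩, h3⟩
    have hd := offspring_dist ct h2
    have h4 : δ / 2 ≤ dist σ x := by
      by_contra hlt
      exact h3 ⟨Metric.mem_ball.2 (not_le.1 hlt), h2⟩
    refine ⟨⟨h1, ?_⟩, ?_⟩
    · rw [Metric.mem_ball]
      have := dist_triangle σ z y
      linarith
    · change ℓ + δ / 2 ≤ dist σ y
      linarith
  have hAd : ∀ σ ∈ A, ℓ ≤ dist σ y := by
    rintro σ ⟨h1, h2⟩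
    rw [Metric.mem_ball] at h1 h2
    rcases tripod ct σ hz with h | h
    · linarith
    · rw [dist_comm z x] at h
      linarith
  have hint : Integrable (fun σ => dist σ y) lam :=
    (continuous_id.dist continuous_const).integrable_of_hasCompactSupport
      (HasCompactSupport.of_compactSpace _)
  have hsplit : ∫ σ in Metric.ball x δ, dist σ y ∂lam
      = ∫ σ in A, dist σ y ∂lam + ∫ σ in Metric.ball z (δ / 2), dist σ y ∂lam := by
    rw [← setIntegral_union Set.disjoint_sdiff_left measurableSet_ball hint.integrableOn
      hint.integrableOn, Set.diff_union_of_subset hsub]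
  have hSA : S ⊆ A := Set.inter_subset_left
  have key : ∫ σ in A, (ℓ + S.indicator (fun _ => δ / 2) σ) ∂lam ≤ ∫ σ in A, dist σ y ∂lam := by
    refine setIntegral_mono_on ?_ hint.integrableOn hAm ?_
    · exact ((integrable_const _).add ((integrable_const _).indicator hSm)).integrableOn
    · intro σ hσ
      by_cases h : σ ∈ S
      · rw [Set.indicator_of_mem h]; exact h.2
      · rw [Set.indicator_of_notMem h, add_zero]; exact hAd σ hσ
  rw [integral_add (integrable_const _) ((integrable_const _).indicator hSm),
    setIntegral_const, setIntegral_indicator hSm, setIntegral_const,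
    Set.inter_eq_self_of_subset_right hSA] at key
  simp only [smul_eq_mul, measureReal_def] at key
  have hmono : (lam (offspringPart δ x y \ offspringPart (δ / 2) x y)).toReal ≤ (lam S).toReal :=
    ENNReal.toReal_mono (measure_ne_top _ _) (measure_mono hOS)
  have := mul_le_mul_of_nonneg_left hmono (by linarith : 0 ≤ δ / 2)
  rw [hsplit]
  linarith
end

section
/- Let (T, ρ) be a continuum tree equipped with a finite Borel measure λ. Let x, y ∈ T be distinct, set ℓ = ρ(x,y), let δ ∈ (0, ℓ), and let z₀ and z₁ be the unique points of [[x,y]] with ρ(x,z₀) = δ/2 and ρ(x,z₁) = 3δ/4. Then ∫_{B_δ(x)} ρ(σ,y) dλ(σ) ≥ λ(B_δ(x))·ℓ + (δ/4)·(2·λ(O_δ(x,y) ∖ O_{δ/2}(x,y)) + λ(O_{δ/2}(z₀,y) ∖ O_{δ/4}(z₀,y))) − (δ/2)·(λ(B_{δ/2}(z₀) ∖ B_{δ/4}(z₁)) + 2·λ(B_{δ/4}(z₁))). -/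
section Aux

variable {T : Type*} [MetricSpace T] [CompactSpace T]

lemma ct_contOn (ct : ContinuumTree T) (x y : T) :
    ContinuousOn (ct.geodesic x y) (Set.Icc 0 (dist x y)) := by
  rw [Metric.continuousOn_iff]
  intro b hb ε hε
  refine ⟨ε, hε, fun a ha hab => ?_⟩
  rw [ct.geodesic_isometry x y a ha b hb]
  simpa [Real.dist_eq] using hab

lemma ct_seg_left (ct : ContinuumTree T) (x y : T) : x ∈ ct.seg x y :=
  ⟨0, ⟨le_rfl, dist_nonneg⟩, ct.geodesic_source x y⟩

lemma ct_seg_right (ct : ContinuumTree T) (x y : T) : y ∈ ct.seg x y :=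
  ⟨dist x y, ⟨dist_nonneg, le_rfl⟩, ct.geodesic_target x y⟩

lemma ct_seg_dist0 (ct : ContinuumTree T) {x y : T} {t : ℝ} (ht : t ∈ Set.Icc 0 (dist x y)) :
    dist x (ct.geodesic x y t) = t := by
  have h := ct.geodesic_isometry x y 0 ⟨le_rfl, dist_nonneg⟩ t ht
  rw [ct.geodesic_source] at h
  rw [h, zero_sub, abs_neg, abs_of_nonneg ht.1]

lemma ct_seg_dist (ct : ContinuumTree T) {x y z : T} (hz : z ∈ ct.seg x y) :
    dist x z + dist z y = dist x y := by
  obtain ⟨t, ht, rfl⟩ := hz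
  have h2 := ct.geodesic_isometry x y t ht (dist x y) ⟨dist_nonneg, le_rfl⟩
  rw [ct.geodesic_target] at h2
  rw [ct_seg_dist0 ct ht, h2, abs_sub_comm, abs_of_nonneg (by linarith [ht.2])]
  ring

lemma ct_seg_preconn (ct : ContinuumTree T) (x y : T) : IsPreconnected (ct.seg x y) :=
  isPreconnected_Icc.image _ (ct_contOn ct x y)

lemma ct_seg_compact (ct : ContinuumTree T) (x y : T) : IsCompact (ct.seg x y) :=
  isCompact_Icc.image_of_continuousOn (ct_contOn ct x y)

lemma ct_not_comp (ct : ContinuumTree T) {x y s : T} (h : s ∉ connectedComponentIn {x}ᶜ y) :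
    dist s x + dist x y = dist s y := by
  apply ct_seg_dist ct
  by_contra hx
  apply h
  refine (ct_seg_preconn ct s y).subset_connectedComponentIn (ct_seg_right ct s y) ?_
    (ct_seg_left ct s y)
  intro w hw hwx
  rw [Set.mem_singleton_iff] at hwx
  exact hx (hwx ▸ hw)

lemma ct_comp_open (ct : ContinuumTree T) (x y : T) :
    IsOpen (connectedComponentIn {x}ᶜ y) := by
  rw [Metric.isOpen_iff]
  intro p hp
  have hpx : p ≠ x := by
    have := connectedComponentIn_subset _ _ hp
    simpa using this
  refine ⟨dist p x, dist_pos.2 hpx, fun q hq => ?_⟩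
  rw [connectedComponentIn_eq hp]
  refine (ct_seg_preconn ct p q).subset_connectedComponentIn (ct_seg_left ct p q) ?_
    (ct_seg_right ct p q)
  intro w hw hwx
  rw [Set.mem_singleton_iff] at hwx
  subst hwx
  have := ct_seg_dist ct hw
  rw [Metric.mem_ball, dist_comm] at hq
  linarith [dist_nonneg (x := w) (y := q)]

lemma ct_inj (ct : ContinuumTree T) {x y : T} {s t : ℝ} (hs : s ∈ Set.Icc 0 (dist x y))
    (ht : t ∈ Set.Icc 0 (dist x y)) (h : ct.geodesic x y s = ct.geodesic x y t) : s = t := by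
  have := ct.geodesic_isometry x y s hs t ht
  rw [h, dist_self] at this
  linarith [abs_eq_zero.1 this.symm]

lemma ct_tripod (ct : ContinuumTree T) {x y z : T} (hxy : x ≠ y) (hz : z ∈ ct.seg x y) (s : T) :
    z ∈ ct.seg x s ∨ z ∈ ct.seg s y := by
  classical
  have hK : IsCompact (Set.Icc 0 (dist x s) ∩ ct.geodesic x s ⁻¹' (ct.seg s y)) :=
    isCompact_Icc.of_isClosed_subset
      ((ct_contOn ct x s).preimage_isClosed_of_isClosed isClosed_Icc
        (ct_seg_compact ct s y).isClosed) Set.inter_subset_left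
  have hne : (Set.Icc 0 (dist x s) ∩ ct.geodesic x s ⁻¹' (ct.seg s y)).Nonempty := by
    refine ⟨dist x s, ⟨dist_nonneg, le_rfl⟩, ?_⟩
    rw [Set.mem_preimage, ct.geodesic_target]
    exact ct_seg_left ct s y
  obtain ⟨a, ⟨ha, b, hb, hab⟩, hmin⟩ := hK.exists_isLeast hne
  set L := a + (dist s y - b) with hL
  have hm1 : dist x (ct.geodesic x s a) = a := ct_seg_dist0 ct ha
  have hm2 : dist (ct.geodesic s y b) y = dist s y - b := by
    have h1 := ct_seg_dist ct (⟨b, hb, rfl⟩ : ct.geodesic s y b ∈ ct.seg s y)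
    rw [ct_seg_dist0 ct hb] at h1
    linarith
  have hLpos : 0 < L := by
    rw [hab] at hm2
    have := dist_triangle x (ct.geodesic x s a) y
    have := dist_pos.2 hxy
    linarith
  have c1 : Continuous (fun t : ℝ => ct.geodesic x s (Set.projIcc 0 (dist x s) dist_nonneg t)) :=
    (continuousOn_iff_continuous_domRestrict.1 (ct_contOn ct x s)).comp continuous_projIcc
  have c2 : Continuous (fun t : ℝ => ct.geodesic s y (Set.projIcc 0 (dist s y) dist_nonneg t)) :=
    (continuousOn_iff_continuous_domRestrict.1 (ct_contOn ct s y)).comp continuous_projIcc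
  let g : ℝ → T := fun t => if t ≤ a then
    ct.geodesic x s (Set.projIcc 0 (dist x s) dist_nonneg t) else
    ct.geodesic s y (Set.projIcc 0 (dist s y) dist_nonneg (b + t - a))
  have hg : Continuous g := by
    refine Continuous.if_le c1 (c2.comp (by fun_prop : Continuous fun t : ℝ => b + t - a))
      continuous_id continuous_const ?_
    intro t ht
    subst ht
    simp only [Function.comp, add_sub_cancel_right]
    rw [Set.projIcc_of_mem _ ha, Set.projIcc_of_mem _ hb]
    exact hab.symm
  have g1 : ∀ t, 0 ≤ t → t ≤ a → g t = ct.geodesic x s t := by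
    intro t h0 h1
    simp only [g, if_pos h1]
    rw [Set.projIcc_of_mem _ ⟨h0, h1.trans ha.2⟩]
  have m2 : ∀ t, a ≤ t → t ≤ L → b + t - a ∈ Set.Icc 0 (dist s y) := by
    intro t h0 h1
    constructor <;> linarith [hb.1]
  have g2 : ∀ t, a ≤ t → t ≤ L → g t = ct.geodesic s y (b + t - a) := by
    intro t h0 h1
    rcases h0.eq_or_lt with rfl | h0
    · rw [g1 _ ha.1 le_rfl, add_sub_cancel_right, hab]
    · simp only [g, if_neg (not_le.2 h0)]
      rw [Set.projIcc_of_mem _ (m2 t h0.le h1)]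
  have hLa : a ≤ L := by linarith [hb.2]
  have ginj : ∀ t t', 0 ≤ t → t < t' → t' ≤ L → g t ≠ g t' := by
    intro t t' h0 h1 h2 he
    rcases le_total t' a with h3 | h3
    · rw [g1 t h0 (by linarith), g1 t' (by linarith) h3] at he
      have := ct_inj ct ⟨h0, by linarith [ha.2]⟩ ⟨by linarith, by linarith [ha.2]⟩ he
      linarith
    · rcases le_total a t with h4 | h4
      · rw [g2 t h4 (by linarith), g2 t' h3 h2] at he
        have := ct_inj ct (m2 t h4 (by linarith)) (m2 t' h3 h2) he
        linarith
      · rw [g1 t h0 h4, g2 t' h3 h2] at he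
        have hta : a ≤ t := by
          apply hmin
          exact ⟨⟨h0, h4.trans ha.2⟩, _, m2 t' h3 h2, he.symm⟩
        have hta' : t = a := le_antisymm h4 hta
        subst hta'
        rw [← hab] at he
        have := ct_inj ct hb (m2 t' h3 h2) he
        linarith
  let γ : Path x y :=
    { toFun := fun u => g (L * u)
      continuous_toFun := hg.comp (by fun_prop)
      source' := by
        simp only [Set.Icc.coe_zero, mul_zero]
        rw [g1 0 le_rfl ha.1, ct.geodesic_source]
      target' := by
        simp only [Set.Icc.coe_one, mul_one]
        rw [g2 L hLa le_rfl]
        have : b + L - a = dist s y := by rw [hL]; ring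
        rw [this, ct.geodesic_target] }
  have hγ : ∀ u, γ u = g (L * u) := fun u => rfl
  have hlt : ∀ u v : unitInterval, u < v → γ u ≠ γ v := by
    intro u v huv
    rw [hγ, hγ]
    refine ginj _ _ (mul_nonneg hLpos.le u.2.1) (mul_lt_mul_of_pos_left huv hLpos) ?_
    nlinarith [v.2.2]
  have hinj : Function.Injective γ := by
    intro u v h
    rcases lt_trichotomy u v with h1 | h1 | h1
    · exact absurd h (hlt u v h1)
    · exact h1
    · exact absurd h.symm (hlt v u h1)
  have him := ct.path_image x y γ hinj
  have hz' : z ∈ Set.range γ := by rw [him]; exact hz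
  obtain ⟨u, rfl⟩ := hz'
  rw [hγ]
  have h0 : 0 ≤ L * u := mul_nonneg hLpos.le u.2.1
  have h1 : L * u ≤ L := by nlinarith [u.2.2]
  rcases le_total (L * u) a with h | h
  · left; rw [g1 _ h0 h]; exact ⟨_, ⟨h0, h.trans ha.2⟩, rfl⟩
  · right; rw [g2 _ h h1]; exact ⟨_, m2 _ h h1, rfl⟩

lemma ct_off_meas [MeasurableSpace T] [BorelSpace T] (ct : ContinuumTree T) (δ : ℝ) (x y : T) :
    MeasurableSet (offspringPart δ x y) :=
  measurableSet_ball.inter (ct_comp_open ct x y).measurableSet.compl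

open Classical in
lemma ct_pointwise (ct : ContinuumTree T)
    {x y : T} (hxy : x ≠ y) {δ : ℝ} (hδ0 : 0 < δ)
    {z₀ z₁ : T} (hz₀ : z₀ ∈ ct.seg x y) (hz₀d : dist x z₀ = δ / 2)
    (hz₁ : z₁ ∈ ct.seg x y) (hz₁d : dist x z₁ = 3 * δ / 4) (s : T) (hs : s ∈ Metric.ball x δ) :
    dist x y + (offspringPart δ x y \ offspringPart (δ / 2) x y).indicator (fun _ => δ / 2) s
      + (offspringPart (δ / 2) z₀ y \ offspringPart (δ / 4) z₀ y).indicator (fun _ => δ / 4) s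
      - (Metric.ball z₀ (δ / 2) \ Metric.ball z₁ (δ / 4)).indicator (fun _ => δ / 2) s
      - (Metric.ball z₁ (δ / 4)).indicator (fun _ => δ) s ≤ dist s y := by
  rw [Metric.mem_ball] at hs
  have e0 := ct_seg_dist ct hz₀
  have e1 := ct_seg_dist ct hz₁
  have t0 := dist_triangle s z₀ y
  have t1 := dist_triangle s z₁ y
  have tx := dist_triangle x s y
  have cx := dist_comm x s
  have k0 : dist x z₀ + dist z₀ s = dist x s ∨ dist s z₀ + dist z₀ y = dist s y :=
    (ct_tripod ct hxy hz₀ s).imp (ct_seg_dist ct) (ct_seg_dist ct)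
  have k1 : dist x z₁ + dist z₁ s = dist x s ∨ dist s z₁ + dist z₁ y = dist s y :=
    (ct_tripod ct hxy hz₁ s).imp (ct_seg_dist ct) (ct_seg_dist ct)
  rw [dist_comm z₀ s] at k0
  rw [dist_comm z₁ s] at k1
  have t01 : dist s z₀ ≤ dist s z₁ + δ / 4 := by
    have a1 := dist_triangle s z₁ y
    rcases k0 with k | k <;> linarith [dist_triangle x z₁ s, dist_comm z₁ s]
  have n0 := dist_nonneg (x := s) (y := x)
  have A : s ∈ (offspringPart δ x y \ offspringPart (δ / 2) x y) →
      dist s x + dist x y = dist s y ∧ δ / 2 ≤ dist s x := by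
    rintro ⟨⟨h1, h2⟩, h3⟩
    refine ⟨ct_not_comp ct h2, ?_⟩
    by_contra h
    exact h3 ⟨by rw [Metric.mem_ball]; linarith, h2⟩
  have B : s ∈ (offspringPart (δ / 2) z₀ y \ offspringPart (δ / 4) z₀ y) →
      dist s z₀ + dist z₀ y = dist s y ∧ δ / 4 ≤ dist s z₀ ∧ dist s z₀ < δ / 2 := by
    rintro ⟨⟨h1, h2⟩, h3⟩
    refine ⟨ct_not_comp ct h2, ?_, h1⟩
    by_contra h
    exact h3 ⟨by rw [Metric.mem_ball]; linarith, h2⟩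
  simp only [Set.indicator_apply]
  simp only [Set.mem_sdiff s (s := Metric.ball z₀ (δ / 2)), Metric.mem_ball]
  by_cases hA : s ∈ (offspringPart δ x y \ offspringPart (δ / 2) x y)
  · obtain ⟨a1, a2⟩ := A hA
    have hB : s ∉ (offspringPart (δ / 2) z₀ y \ offspringPart (δ / 4) z₀ y) := by
      intro h
      obtain ⟨b1, b2, b3⟩ := B h
      linarith
    rw [if_pos hA, if_neg hB]
    split_ifs <;> linarith
  · rw [if_neg hA]
    by_cases hB : s ∈ (offspringPart (δ / 2) z₀ y \ offspringPart (δ / 4) z₀ y)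
    · obtain ⟨b1, b2, b3⟩ := B hB
      rw [if_pos hB]
      by_cases h1 : dist s z₁ < δ / 4
      · rw [if_neg (by tauto), if_pos h1]; linarith
      · rw [if_pos ⟨b3, h1⟩, if_neg h1]; linarith
    · rw [if_neg hB]
      by_cases h1 : dist s z₁ < δ / 4
      · rw [if_neg (by tauto), if_pos h1]; linarith
      · rw [if_neg h1]
        by_cases h0 : dist s z₀ < δ / 2
        · rw [if_pos ⟨h0, h1⟩]
          rcases k1 with k | k <;> linarith
        · rw [if_neg (by tauto)]
          rcases k0 with k | k <;> linarith

end Aux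

open MeasureTheory in
/-- The twice-iterated lower bound for `∫_{B_δ(x)} ρ(σ,y) dλ(σ)` in a continuum tree. -/
theorem stmt_13 {T : Type*} [MetricSpace T] [CompactSpace T]
    [MeasurableSpace T] [BorelSpace T] (ct : ContinuumTree T)
    (lam : Measure T) [IsFiniteMeasure lam]
    {x y : T} (hxy : x ≠ y) {δ : ℝ} (hδ0 : 0 < δ) (hδℓ : δ < dist x y)
    {z₀ z₁ : T} (hz₀ : z₀ ∈ ct.seg x y) (hz₀d : dist x z₀ = δ / 2)
    (hz₁ : z₁ ∈ ct.seg x y) (hz₁d : dist x z₁ = 3 * δ / 4) :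
    (lam (Metric.ball x δ)).toReal * dist x y
        + (δ / 4) * (2 * (lam (offspringPart δ x y \ offspringPart (δ / 2) x y)).toReal
            + (lam (offspringPart (δ / 2) z₀ y \ offspringPart (δ / 4) z₀ y)).toReal)
        - (δ / 2) * ((lam (Metric.ball z₀ (δ / 2) \ Metric.ball z₁ (δ / 4))).toReal
            + 2 * (lam (Metric.ball z₁ (δ / 4))).toReal)
      ≤ ∫ σ in Metric.ball x δ, dist σ y ∂lam := by
  have mA := (ct_off_meas ct δ x y).diff (ct_off_meas ct (δ / 2) x y)
  have mB := (ct_off_meas ct (δ / 2) z₀ y).diff (ct_off_meas ct (δ / 4) z₀ y)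
  have mC : MeasurableSet (Metric.ball z₀ (δ / 2) \ Metric.ball z₁ (δ / 4)) :=
    measurableSet_ball.diff measurableSet_ball
  have mD : MeasurableSet (Metric.ball z₁ (δ / 4)) := measurableSet_ball
  have hI : IntegrableOn (fun s => dist s y) (Metric.ball x δ) lam :=
    ((by fun_prop : Continuous fun s => dist s y).continuousOn.integrableOn_compact
      isCompact_univ).mono_set (Set.subset_univ _)
  have sub0 : Metric.ball z₀ (δ / 2) ⊆ Metric.ball x δ := by
    intro s hs
    rw [Metric.mem_ball] at *
    linarith [dist_triangle s z₀ x, dist_comm x z₀]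
  have sub1 : Metric.ball z₁ (δ / 4) ⊆ Metric.ball x δ := by
    intro s hs
    rw [Metric.mem_ball] at *
    linarith [dist_triangle s z₁ x, dist_comm x z₁]
  have sA : (offspringPart δ x y \ offspringPart (δ / 2) x y) ⊆ Metric.ball x δ :=
    fun s hs => hs.1.1
  have sB : (offspringPart (δ / 2) z₀ y \ offspringPart (δ / 4) z₀ y) ⊆ Metric.ball x δ :=
    fun s hs => sub0 hs.1.1
  have sC : (Metric.ball z₀ (δ / 2) \ Metric.ball z₁ (δ / 4)) ⊆ Metric.ball x δ :=
    fun s hs => sub0 hs.1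
  have key : ∀ (S : Set T) (c : ℝ), MeasurableSet S → S ⊆ Metric.ball x δ →
      Integrable (S.indicator fun _ => c) (lam.restrict (Metric.ball x δ)) ∧
      ∫ s in Metric.ball x δ, S.indicator (fun _ => c) s ∂lam = c * (lam S).toReal := by
    intro S c hS hsub
    refine ⟨(integrable_const c).indicator hS, ?_⟩
    rw [integral_indicator hS, Measure.restrict_restrict hS, Set.inter_eq_left.2 hsub,
      setIntegral_const, smul_eq_mul, mul_comm]
    rfl
  obtain ⟨iA, eA⟩ := key _ (δ / 2) mA sA
  obtain ⟨iB, eB⟩ := key _ (δ / 4) mB sB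
  obtain ⟨iC, eC⟩ := key _ (δ / 2) mC sC
  obtain ⟨iD, eD⟩ := key _ δ mD sub1
  have i0 : Integrable (fun _ : T => dist x y) (lam.restrict (Metric.ball x δ)) :=
    integrable_const _
  have hmono := setIntegral_mono_on ((((i0.add iA).add iB).sub iC).sub iD) hI
    measurableSet_ball (fun s hs => ct_pointwise ct hxy hδ0 hz₀ hz₀d hz₁ hz₁d s hs)
  refine le_trans (le_of_eq ?_) hmono
  rw [integral_sub' (((i0.add iA).add iB).sub iC) iD, integral_sub' ((i0.add iA).add iB) iC,
    integral_add' (i0.add iA) iB, integral_add' i0 iA, eA, eB, eC, eD, setIntegral_const,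
    smul_eq_mul, Measure.real]
  ring
end

section
/- Define α : ℝ → ℝ by α(δ) = 1 − exp(−2δ²), and define f : ℝ → ℝ by f(δ) = 1/4 − (α(δ/2) + 9·α(δ/4))/(8·α(δ)) for δ ≠ 0 and f(0) = 19/128. Then f is differentiable at 0 with derivative f'(0) = 0. -/
/-- `α(δ) = 1 - exp(-2δ²)`, the expected volume of a ball of radius `δ` in the BCRT. -/
noncomputable def alphaFn (δ : ℝ) : ℝ := 1 - Real.exp (-2 * δ ^ 2)

/-- `f(δ) = 1/4 - (α(δ/2) + 9 α(δ/4)) / (8 α(δ))` (for `δ ≠ 0`). -/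
noncomputable def fFn (δ : ℝ) : ℝ :=
  1 / 4 - (alphaFn (δ / 2) + 9 * alphaFn (δ / 4)) / (8 * alphaFn δ)

/-- The function `f`, extended by `f(0) = 19/128`, is differentiable at `0` with
derivative `0`. -/
theorem stmt_16 :
    HasDerivAt (fun δ : ℝ => if δ = 0 then 19 / 128 else fFn δ) 0 0 := by
  have hy : HasDerivAt (fun δ : ℝ => Real.exp (-(δ ^ 2) / 8)) 0 0 := by
    have h := (((hasDerivAt_pow 2 (0 : ℝ)).neg.div_const 8).exp)
    exact h.congr_deriv (by norm_num)
  have hG : DifferentiableAt ℝ (fun y : ℝ => 1 / 4 - (10 + y + y ^ 2 + y ^ 3) /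
      (8 * ((1 + y) * (1 + y ^ 2) * (1 + y ^ 4) * (1 + y ^ 8))))
      (Real.exp (-((0 : ℝ) ^ 2) / 8)) := by
    refine DifferentiableAt.sub (by fun_prop) (DifferentiableAt.div (by fun_prop) (by fun_prop) ?_)
    positivity
  have hc := hG.hasDerivAt.comp (0 : ℝ) hy
  rw [mul_zero] at hc
  refine hc.congr_of_eventuallyEq (Filter.Eventually.of_forall fun δ => ?_)
  simp only [Function.comp]
  split_ifs with h
  · subst h
    norm_num
  · have h4 : Real.exp (-2 * (δ / 4) ^ 2) = Real.exp (-(δ ^ 2) / 8) := by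
      congr 1; ring
    have h2 : Real.exp (-2 * (δ / 2) ^ 2) = Real.exp (-(δ ^ 2) / 8) ^ 4 := by
      rw [← Real.exp_nat_mul]; congr 1; push_cast; ring
    have h1 : Real.exp (-2 * δ ^ 2) = Real.exp (-(δ ^ 2) / 8) ^ 16 := by
      rw [← Real.exp_nat_mul]; congr 1; push_cast; ring
    have hlt : Real.exp (-(δ ^ 2) / 8) < 1 := by
      rw [Real.exp_lt_one_iff]
      have : 0 < δ ^ 2 := by positivity
      linarith
    have hpos := Real.exp_pos (-(δ ^ 2) / 8)
    unfold fFn alphaFn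
    rw [h4, h2, h1]
    generalize Real.exp (-(δ ^ 2) / 8) = y at *
    have hne : (1 - y) ≠ 0 := (sub_pos.mpr hlt).ne'
    have e1 : 1 - y ^ 4 + 9 * (1 - y) = (1 - y) * (10 + y + y ^ 2 + y ^ 3) := by ring
    have e2 : 8 * (1 - y ^ 16) =
        (1 - y) * (8 * ((1 + y) * (1 + y ^ 2) * (1 + y ^ 4) * (1 + y ^ 8))) := by ring
    rw [e1, e2, mul_div_mul_left _ _ hne]
end

section
/- Define α : ℝ → ℝ by α(δ) = 1 − exp(−2δ²), and define f : ℝ → ℝ by f(δ) = 1/4 − (α(δ/2) + 9·α(δ/4))/(8·α(δ)) for δ ≠ 0 and f(0) = 19/128. Then 0 is a strict local maximum of f: there exists a > 0 such that f(δ) < 19/128 for all δ with 0 < |δ| < a. -/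
/-- `0` is a strict local maximum of `f` (extended by `f(0) = 19/128`): there is `a > 0`
with `f(δ) < 19/128` whenever `0 < |δ| < a`. -/
theorem stmt_17 :
    ∃ a > (0 : ℝ), ∀ δ : ℝ, 0 < |δ| → |δ| < a → fFn δ < 19 / 128 := by
  refine ⟨1, one_pos, fun δ h0 _ => ?_⟩
  have hδ : 0 < δ ^ 2 := by
    have := abs_pos.mp h0
    positivity
  obtain ⟨y, hy⟩ : ∃ y, y = Real.exp (-(δ ^ 2) / 8) := ⟨_, rfl⟩
  have y0 : 0 < y := hy ▸ Real.exp_pos _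
  have y1 : y < 1 := by
    rw [hy, Real.exp_lt_one_iff]
    linarith
  have e1 : alphaFn δ = 1 - y ^ 16 := by
    rw [alphaFn, hy, ← Real.exp_nat_mul]
    congr 2
    push_cast
    ring
  have e2 : alphaFn (δ / 2) = 1 - y ^ 4 := by
    rw [alphaFn, hy, ← Real.exp_nat_mul]
    congr 2
    push_cast
    ring
  have e3 : alphaFn (δ / 4) = 1 - y := by
    rw [alphaFn, hy]
    congr 2
    ring
  have h16 : y ^ 16 < 1 := pow_lt_one₀ y0.le y1 (by norm_num)
  have h4 : y ^ 4 < 1 := pow_lt_one₀ y0.le y1 (by norm_num)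
  have hp : ∀ m n : ℕ, m ≤ n → y ^ n ≤ y ^ m := fun m n h =>
    pow_le_pow_of_le_one y0.le y1.le h
  have hQ : 0 < 147 + 3 * (y + y ^ 2 + y ^ 3) - 13 * (y ^ 4 + y ^ 5 + y ^ 6 + y ^ 7 + y ^ 8
      + y ^ 9 + y ^ 10 + y ^ 11 + y ^ 12 + y ^ 13 + y ^ 14 + y ^ 15) := by
    have := hp 1 4 (by norm_num)
    rw [pow_one] at this
    linarith [hp 2 4 (by norm_num), hp 3 4 (by norm_num), hp 4 5 (by norm_num),
      hp 4 6 (by norm_num), hp 4 7 (by norm_num), hp 4 8 (by norm_num), hp 4 9 (by norm_num),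
      hp 4 10 (by norm_num), hp 4 11 (by norm_num), hp 4 12 (by norm_num),
      hp 4 13 (by norm_num), hp 4 14 (by norm_num), hp 4 15 (by norm_num)]
  have hm := mul_pos (sub_pos.mpr y1) hQ
  have key : 13 / 128 < (1 - y ^ 4 + 9 * (1 - y)) / (8 * (1 - y ^ 16)) := by
    rw [lt_div_iff₀ (by linarith)]
    ring_nf at hm ⊢
    linarith
  rw [fFn, e1, e2, e3]
  linarith
end
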